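/- Let P₀ be the probability measure on S^{T+1} given by P₀({r}) = π_{r_0} ∏_{t=1}^{T} p_{r_{t−1} r_t}, and write H_t(r) = (n_t(r), r_t). Then for every 0 ≤ t < T, every i, j ∈ S and every pair of counter vectors n, n′ ∈ (ℕ₊)^k: P₀(H_{t+1} = (n′, j) and H_t = (n, i)) = p_{ij} · P₀(H_t = (n, i)) if either [i ∈ S_AR^c and n′ = n + 1] or [i ∈ S_AR and n′ = n^{(−i)} + 1], and P₀(H_{t+1} = (n′, j) and H_t = (n, i)) = 0 otherwise. (These are the transition probabilities of the augmented hidden Markov chain {H_t}.) -/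

import Mathlib

open Finset

namespace MRS

/-- Time since the last visit to the regime with value `j` strictly before time `t`;
equals `t + 1` if that regime was never visited before time `t`. -/
def counter {M : ℕ} (r : ℕ → Fin M) (t : ℕ) (j : ℕ) : ℕ :=
  if h : ((Finset.range t).filter fun τ => (r τ : ℕ) = j).Nonempty then
    t - ((Finset.range t).filter fun τ => (r τ : ℕ) = j).max' h
  else t + 1

/-- Counter vector for the `k` AR(1) regimes (the regimes with values `0, …, k-1`). -/
def nvec {M : ℕ} (k : ℕ) (r : ℕ → Fin M) (t : ℕ) : Fin k → ℕ :=
  fun j => counter r t (j : ℕ)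

/-- Extend a finite path to a stream (values beyond the end repeat the last value;
they are never used for counters up to time `t`). -/
def pad {M t : ℕ} (r : Fin (t + 1) → Fin M) : ℕ → Fin M :=
  fun s => r ⟨min s t, Nat.lt_succ_of_le (min_le_right s t)⟩

/-- The set `S^(t)` of possible counter vectors at time `t`: every entry lies in
`{1, …, t+1}`, at most `min t k` entries differ from `t+1`, and the entries different
from `t+1` are pairwise distinct. -/
def Sset (k t : ℕ) : Finset (Fin k → ℕ) :=
  (Fintype.piFinset fun _ : Fin k => Finset.Icc 1 (t + 1)).filter fun n =>
    (Finset.univ.filter fun j => n j ≠ t + 1).card ≤ min t k ∧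
      ∀ i j : Fin k, i ≠ j → n i ≠ t + 1 → n j ≠ t + 1 → n i ≠ n j

end MRS

namespace MRS

/-- The (prior) probability of a regime path: `P₀({r}) = π_{r_0} ∏_{t=1}^T p_{r_{t-1} r_t}`. -/
noncomputable def w0 {M : ℕ} (pi0 : Fin M → ℝ) (p : Fin M → Fin M → ℝ) {T : ℕ}
    (r : Fin (T + 1) → Fin M) : ℝ :=
  pi0 (r 0) * ∏ t ∈ Finset.Icc 1 T, p (pad r (t - 1)) (pad r t)

end MRS

/-!
The counter vector at time `t + 1` is a function of the counter vector and the regime at time `t`: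
the counter of the regime just visited restarts at `1`, all others grow by `1`. So only the event
`r_{t+1} = j` is random given `H_t`. Since `H_t` depends on the path up to time `t` alone and the
rows of `p` sum to `1`, summing out the regimes after time `t + 1` leaves the single factor `p i j`.
-/

namespace MRS

section Counters

variable {M : ℕ}

lemma counter_succ (r : ℕ → Fin M) (t j : ℕ) :
    counter r (t + 1) j = (if j = r t then 0 else counter r t j) + 1 := by
  by_cases hj : j = r t
  · have ht : t ∈ {τ ∈ range (t + 1) | (r τ : ℕ) = j} := by simp [hj]
    have hmax : Finset.max' _ ⟨t, ht⟩ = t :=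
      le_antisymm
        (max'_le _ _ _ fun τ hτ ↦ Nat.lt_succ_iff.1 (mem_range.1 (mem_filter.1 hτ).1))
        (le_max' _ t ht)
    rw [counter, dif_pos ⟨t, ht⟩, hmax, if_pos hj, Nat.add_sub_cancel_left, zero_add]
  · have hvisits : {τ ∈ range (t + 1) | (r τ : ℕ) = j} = {τ ∈ range t | (r τ : ℕ) = j} := by
      rw [range_add_one, filter_insert, if_neg (Ne.symm hj)]
    simp only [counter, hvisits, if_neg hj]
    split_ifs with hne
    · have hlt := mem_range.1 (mem_filter.1 (max'_mem _ hne)).1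
      exact Nat.sub_add_comm hlt.le
    · rfl

lemma dependsOn_counter (t j : ℕ) :
    DependsOn (fun r : ℕ → Fin M ↦ counter r t j) (Set.Iio t) := by
  intro u v huv
  have hvisits : {τ ∈ range t | (u τ : ℕ) = j} = {τ ∈ range t | (v τ : ℕ) = j} :=
    filter_congr fun τ hτ ↦ by rw [huv τ (mem_range.1 hτ)]
  simp only [counter, hvisits]

lemma dependsOn_nvec (k t : ℕ) : DependsOn (fun r : ℕ → Fin M ↦ nvec k r t) (Set.Iio t) :=
  fun _ _ huv ↦ funext fun ℓ ↦ dependsOn_counter t ℓ huv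

/-- The counter vector following `n` after a visit to regime `i`. It is the paper's `n^{(-i)} + 1`
when `i` is an AR(1) regime, and `n + 1` otherwise, as then no index `ℓ : Fin k` has value `i`. -/
def nextCounters {k : ℕ} (i : Fin M) (n : Fin k → ℕ) : Fin k → ℕ :=
  fun ℓ ↦ (if (ℓ : ℕ) = i then 0 else n ℓ) + 1

lemma nvec_succ (k : ℕ) (r : ℕ → Fin M) (t : ℕ) :
    nvec k r (t + 1) = nextCounters (r t) (nvec k r t) :=
  funext fun ℓ ↦ counter_succ r t ℓ

lemma nextCounters_of_le {k : ℕ} {i : Fin M} (hi : k ≤ i) (n : Fin k → ℕ) :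
    nextCounters i n = fun ℓ ↦ n ℓ + 1 :=
  funext fun ℓ ↦ by rw [nextCounters, if_neg (ℓ.2.trans_le hi).ne]

lemma eq_nextCounters_iff {k : ℕ} (i : Fin M) (n n' : Fin k → ℕ) :
    n' = nextCounters i n ↔
      (k ≤ (i : ℕ) ∧ n' = fun ℓ : Fin k => n ℓ + 1) ∨
        ((i : ℕ) < k ∧ n' = fun ℓ : Fin k => (if (ℓ : ℕ) = (i : ℕ) then 0 else n ℓ) + 1) := by
  rcases le_or_gt k i with hi | hi
  · simp [nextCounters_of_le hi, hi, hi.not_gt]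
  · simp [nextCounters, funext_iff, hi, hi.not_ge]

end Counters

section Paths

variable {M T : ℕ}

lemma pad_snoc_of_le (r : Fin (T + 1) → Fin M) (x : Fin M) {s : ℕ} (hs : s ≤ T) :
    pad (Fin.snoc r x : Fin (T + 2) → Fin M) s = pad r s := by
  have hindex : (⟨min s (T + 1), by omega⟩ : Fin (T + 2)) = Fin.castSucc ⟨min s T, by omega⟩ := by
    ext
    simp [hs, hs.trans (Nat.le_succ T)]
  rw [pad, hindex, Fin.snoc_castSucc (α := fun _ ↦ Fin M), pad]

lemma pad_snoc_last (r : Fin (T + 1) → Fin M) (x : Fin M) :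
    pad (Fin.snoc r x : Fin (T + 2) → Fin M) (T + 1) = x := by
  have hindex : (⟨min (T + 1) (T + 1), by omega⟩ : Fin (T + 2)) = Fin.last (T + 1) := by
    ext
    simp
  rw [pad, hindex, Fin.snoc_last (α := fun _ ↦ Fin M)]

variable (pi0 : Fin M → ℝ) (p : Fin M → Fin M → ℝ)

lemma w0_snoc (r : Fin (T + 1) → Fin M) (x : Fin M) :
    w0 pi0 p (Fin.snoc r x : Fin (T + 2) → Fin M) = w0 pi0 p r * p (pad r T) x := by
  have hinit : (Fin.snoc r x : Fin (T + 2) → Fin M) 0 = r 0 :=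
    Fin.snoc_castSucc (α := fun _ ↦ Fin M) x r 0
  have hprod : ∏ t ∈ Icc 1 T, p (pad (Fin.snoc r x : Fin (T + 2) → Fin M) (t - 1))
        (pad (Fin.snoc r x : Fin (T + 2) → Fin M) t) =
      ∏ t ∈ Icc 1 T, p (pad r (t - 1)) (pad r t) :=
    prod_congr rfl fun t ht ↦ by
      have htT := (mem_Icc.1 ht).2
      rw [pad_snoc_of_le r x htT, pad_snoc_of_le r x ((Nat.sub_le t 1).trans htT)]
  rw [w0, prod_Icc_succ_top (Nat.le_add_left 1 T), pad_snoc_last, Nat.add_sub_cancel,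
    pad_snoc_of_le r x le_rfl, hinit, hprod, ← mul_assoc, w0]

/-- The expectation `E₀[F(r)]` of a function of the regime path `r_0, …, r_T` under `P₀`. The
function is defined on infinite sequences, so that expectations for different horizons `T` can be
compared. -/
noncomputable def pathExpectation (T : ℕ) (F : (ℕ → Fin M) → ℝ) : ℝ :=
  ∑ r : Fin (T + 1) → Fin M, w0 pi0 p r * F (pad r)

lemma sum_filter_w0 (Q : (ℕ → Fin M) → Prop) [DecidablePred Q] :
    ∑ r : Fin (T + 1) → Fin M with Q (pad r), w0 pi0 p r =
      pathExpectation pi0 p T fun u ↦ if Q u then 1 else 0 := by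
  simp only [pathExpectation, sum_filter, mul_ite, mul_one, mul_zero]

lemma pathExpectation_succ {F : (ℕ → Fin M) → ℝ} (hF : DependsOn F (Set.Iic T)) (f : Fin M → ℝ) :
    pathExpectation pi0 p (T + 1) (fun u ↦ F u * f (u (T + 1))) =
      pathExpectation pi0 p T fun u ↦ F u * ∑ x, p (u T) x * f x := by
  have hsnoc (r : Fin (T + 1) → Fin M) (x : Fin M) :
      F (pad (Fin.snoc r x : Fin (T + 2) → Fin M)) = F (pad r) :=
    hF fun _ hs ↦ pad_snoc_of_le r x hs
  calc
    _ = ∑ r : Fin (T + 1) → Fin M, ∑ x, w0 pi0 p (Fin.snoc r x : Fin (T + 2) → Fin M) *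
          (F (pad (Fin.snoc r x : Fin (T + 2) → Fin M)) *
            f (pad (Fin.snoc r x : Fin (T + 2) → Fin M) (T + 1))) := by
      rw [pathExpectation, ← (Fin.snocEquiv fun _ ↦ Fin M).sum_comp, Fintype.sum_prod_type_right]
      rfl
    _ = ∑ r : Fin (T + 1) → Fin M, ∑ x, w0 pi0 p r * (F (pad r) * (p (pad r T) x * f x)) := by
      refine sum_congr rfl fun r _ ↦ sum_congr rfl fun x _ ↦ ?_
      rw [w0_snoc, hsnoc, pad_snoc_last]
      ring
    _ = _ := by simp only [pathExpectation, mul_sum]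

variable {p} {t : ℕ}

lemma pathExpectation_eq_of_le (hprow : ∀ i, ∑ j, p i j = 1) {F : (ℕ → Fin M) → ℝ}
    (hF : DependsOn F (Set.Iic t)) (htT : t ≤ T) :
    pathExpectation pi0 p T F = pathExpectation pi0 p t F := by
  induction T, htT using Nat.le_induction with
  | base => rfl
  | succ T htT ih =>
    rw [← ih]
    simpa only [mul_one, hprow] using
      pathExpectation_succ pi0 p (hF.mono (Set.Iic_subset_Iic.2 htT)) fun _ ↦ 1

theorem pathExpectation_markov (hprow : ∀ i, ∑ j, p i j = 1) (htT : t < T)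
    {F : (ℕ → Fin M) → ℝ} (hF : DependsOn F (Set.Iic t)) (f : Fin M → ℝ) :
    pathExpectation pi0 p T (fun u ↦ F u * f (u (t + 1))) =
      pathExpectation pi0 p T fun u ↦ F u * ∑ x, p (u t) x * f x := by
  have hnext : DependsOn (fun u : ℕ → Fin M ↦ F u * f (u (t + 1))) (Set.Iic (t + 1)) :=
    fun u v huv ↦ congrArg₂ (· * ·)
      (hF fun s hs ↦ huv s (Set.Iic_subset_Iic.2 t.le_succ hs))
      (congrArg f (huv (t + 1) Set.self_mem_Iic))
  have hpresent : DependsOn (fun u : ℕ → Fin M ↦ F u * ∑ x, p (u t) x * f x) (Set.Iic t) :=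
    fun u v huv ↦ by simp only [hF huv, huv t Set.self_mem_Iic]
  rw [pathExpectation_eq_of_le pi0 hprow hnext htT, pathExpectation_succ pi0 p hF,
    pathExpectation_eq_of_le pi0 hprow hpresent htT.le]

theorem sum_w0_markov (hprow : ∀ i, ∑ j, p i j = 1) (htT : t < T)
    {A : (ℕ → Fin M) → Prop} [DecidablePred A] (hA : DependsOn A (Set.Iic t)) (i j : Fin M) :
    ∑ r : Fin (T + 1) → Fin M with pad r (t + 1) = j ∧ pad r t = i ∧ A (pad r), w0 pi0 p r =
      p i j * ∑ r : Fin (T + 1) → Fin M with pad r t = i ∧ A (pad r), w0 pi0 p r := by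
  let F : (ℕ → Fin M) → ℝ := fun u ↦ if u t = i ∧ A u then 1 else 0
  have hF : DependsOn F (Set.Iic t) := fun u v huv ↦ by
    simp only [F, hA huv, huv t Set.self_mem_Iic]
  calc
    _ = pathExpectation pi0 p T fun u ↦ F u * if u (t + 1) = j then 1 else 0 := by
      rw [sum_filter_w0 pi0 p fun u ↦ u (t + 1) = j ∧ u t = i ∧ A u]
      simp only [F, ite_and, ite_mul, one_mul, zero_mul]
      congr! 2 with u
      split_ifs <;> rfl
    _ = pathExpectation pi0 p T fun u ↦ F u * p (u t) j := by
      rw [pathExpectation_markov pi0 hprow htT hF fun x ↦ if x = j then 1 else 0]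
      simp only [mul_ite, mul_one, mul_zero, sum_ite_eq', mem_univ, if_true]
    _ = p i j * pathExpectation pi0 p T F := by
      simp only [pathExpectation, mul_sum]
      refine sum_congr rfl fun r _ ↦ ?_
      by_cases hr : pad r t = i ∧ A (pad r)
      · rw [hr.1]
        ring
      · simp only [F, if_neg hr, zero_mul, mul_zero]
    _ = _ := by rw [sum_filter_w0 pi0 p fun u ↦ u t = i ∧ A u]

end Paths

end MRS

open MRS in
theorem augmented_chain_transitions_general {M k T t : ℕ} (ht : t < T) (pi0 : Fin M → ℝ)
    {p : Fin M → Fin M → ℝ} (hprow : ∀ i, ∑ j, p i j = 1)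
    {A : (ℕ → Fin M) → Prop} [DecidablePred A] (hA : DependsOn A (Set.Iic t))
    (i j : Fin M) (n n' : Fin k → ℕ) :
    ∑ r : Fin (T + 1) → Fin M with (pad r (t + 1) = j ∧ nvec k (pad r) (t + 1) = n') ∧
        (pad r t = i ∧ nvec k (pad r) t = n) ∧ A (pad r), w0 pi0 p r =
      if n' = nextCounters i n then
        p i j * ∑ r : Fin (T + 1) → Fin M with
          (pad r t = i ∧ nvec k (pad r) t = n) ∧ A (pad r), w0 pi0 p r
      else 0 := by
  have hnext {u : ℕ → Fin M} (hi : u t = i) (hn : nvec k u t = n) :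
      nvec k u (t + 1) = nextCounters i n := by rw [nvec_succ, hi, hn]
  have hpast : DependsOn (fun u ↦ nvec k u t = n ∧ A u) (Set.Iic t) := fun u v huv ↦ by
    simp only [hA huv, dependsOn_nvec k t fun s hs ↦ huv s (Set.Iio_subset_Iic_self hs)]
  split_ifs with hn'
  · simp only [and_assoc]
    rw [← sum_w0_markov pi0 hprow ht hpast]
    refine sum_congr (filter_congr fun r _ ↦ ?_) fun _ _ ↦ rfl
    exact ⟨fun ⟨hj, _, h⟩ ↦ ⟨hj, h⟩,
      fun ⟨hj, hi, hn, hr⟩ ↦ ⟨hj, (hnext hi hn).trans hn'.symm, hi, hn, hr⟩⟩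
  · rw [filter_false_of_mem, sum_empty]
    rintro r - ⟨⟨-, h⟩, ⟨hi, hn⟩, -⟩
    exact hn' (h.symm.trans (hnext hi hn))

open MRS in
/-- Transition probabilities of the augmented hidden Markov chain
`H_t = (n_t(r), r_t)` under the path measure `P₀`:
`P₀(H_{t+1} = (n', j), H_t = (n, i)) = p_{ij} · P₀(H_t = (n, i))` if either
`i ∈ S_AR^c` and `n' = n + 1`, or `i ∈ S_AR` and `n' = n^{(−i)} + 1`; and the
probability is `0` otherwise. -/
theorem augmented_chain_transitions (M k T : ℕ) (hM : 2 ≤ M) (hk : 1 ≤ k) (hkM : k < M)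
    (hT : 1 ≤ T)
    (pi0 : Fin M → ℝ) (p : Fin M → Fin M → ℝ)
    (hpi : ∀ i, 0 ≤ pi0 i) (hpisum : ∑ i, pi0 i = 1)
    (hp : ∀ i j, 0 ≤ p i j) (hprow : ∀ i, ∑ j, p i j = 1)
    (t : ℕ) (ht : t < T) (i j : Fin M) (n n' : Fin k → ℕ) :
    (∑ r ∈ Finset.univ.filter (fun r : Fin (T + 1) → Fin M =>
        (pad r (t + 1) = j ∧ nvec k (pad r) (t + 1) = n') ∧
          (pad r t = i ∧ nvec k (pad r) t = n)), w0 pi0 p r)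
      = if (k ≤ (i : ℕ) ∧ n' = fun ℓ : Fin k => n ℓ + 1) ∨
            ((i : ℕ) < k ∧ n' = fun ℓ : Fin k => (if (ℓ : ℕ) = (i : ℕ) then 0 else n ℓ) + 1) then
          p i j *
            ∑ r ∈ Finset.univ.filter (fun r : Fin (T + 1) → Fin M =>
                pad r t = i ∧ nvec k (pad r) t = n), w0 pi0 p r
        else 0 := by
  simpa only [eq_nextCounters_iff, and_true] using
    augmented_chain_transitions_general ht pi0 hprow (A := fun _ ↦ True) (fun _ _ _ ↦ rfl) i j n n'
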